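/- Let n ≥ 1 be an integer, Ω ⊂ ℝⁿ a bounded open set, T > 0, x₀ ∈ ℝⁿ \ cl(Ω), β ∈ (0,1), C₀ > 0 such that ψ ≥ 1 on Ω × (−T,T), where ψ(x,t) = |x−x₀|² − βt² + C₀, and φ = e^{λψ} for λ ≥ 1. Let η ∈ (0, T). Then there exist M > 0 and s₀ > 0 such that for every s ≥ s₀ and every smooth z : ℝⁿ × ℝ → ℝ vanishing for x outside a compact subset of Ω, the weighted energy E_s(t) = (1/2) ∫_Ω e^{2sφ(x,t)} (|∂ₜz|² + |∇z|²) dx satisfies E_s(T−η) ≤ M s ∫_{−T+η}^{T−η} E_s(t) dt + (M/s) ∫_{−T}^{T} ∫_Ω e^{2sφ} |∂ₜ²z − Δz|² dx dt. -/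

import Mathlib

open MeasureTheory Real Set
open scoped RealInnerProductSpace

/-- The Laplacian of a real-valued function on Euclidean space. -/
noncomputable def lap {n : ℕ} (f : EuclideanSpace ℝ (Fin n) → ℝ) (x : EuclideanSpace ℝ (Fin n)) : ℝ :=
  ∑ i : Fin n, fderiv ℝ (fun y => fderiv ℝ f y (EuclideanSpace.single i 1)) x (EuclideanSpace.single i 1)

/-- The weight `ψ(x,t) = |x - x₀|² - β t² + C₀`. -/
noncomputable def psi {n : ℕ} (x₀ : EuclideanSpace ℝ (Fin n)) (β C₀ : ℝ)
    (x : EuclideanSpace ℝ (Fin n)) (t : ℝ) : ℝ :=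
  ‖x - x₀‖ ^ 2 - β * t ^ 2 + C₀

/-- The Carleman weight `φ = e^{λψ}`. -/
noncomputable def phi {n : ℕ} (x₀ : EuclideanSpace ℝ (Fin n)) (β C₀ l : ℝ)
    (x : EuclideanSpace ℝ (Fin n)) (t : ℝ) : ℝ :=
  Real.exp (l * psi x₀ β C₀ x t)

/-!
Differentiating the weighted energy `E` under the integral and integrating by parts in space gives
the energy identity. By Cauchy–Schwarz and Young's inequality, a weight `w` with `|∂w| ≤ B w` then
yields `E' ≤ (2B + s) E + (2s)⁻¹ ∫ w |∂ₜ²z - Δz|²` for every `s > 0`. Integrating this from a time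
at which `E` does not exceed its average up to the final time bounds the final energy by the time
integrals of both terms. For `w = e^{2sφ}` one may take `B = 2s sup |∂φ|`, so the coefficient of
the energy is `O(s)`.
-/

open Function
open scoped Gradient Laplacian Topology

section TimeSlices

variable {E F : Type*} [NormedAddCommGroup E] [NormedSpace ℝ E] [NormedAddCommGroup F]
  [NormedSpace ℝ F] {f : E → ℝ → F} {x : E} {t : ℝ} {m n : WithTop ℕ∞}

theorem hasDerivAt_of_differentiableAt_uncurry (hf : DifferentiableAt ℝ (uncurry f) (x, t)) :
    HasDerivAt (f x) (fderiv ℝ (uncurry f) (x, t) (0, 1)) t :=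
  hf.hasFDerivAt.comp_hasDerivAt t ((hasDerivAt_const t x).prodMk (hasDerivAt_id t))

theorem hasFDerivAt_of_differentiableAt_uncurry (hf : DifferentiableAt ℝ (uncurry f) (x, t)) :
    HasFDerivAt (fun y => f y t) (fderiv ℝ (uncurry f) (x, t) ∘L .inl ℝ E ℝ) x :=
  hf.hasFDerivAt.comp (f := fun y => (y, t)) x (hasFDerivAt_prodMk_left x t)

theorem norm_deriv_le_norm_fderiv_uncurry (hf : DifferentiableAt ℝ (uncurry f) (x, t)) :
    ‖deriv (f x) t‖ ≤ ‖fderiv ℝ (uncurry f) (x, t)‖ := by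
  rw [(hasDerivAt_of_differentiableAt_uncurry hf).deriv]
  exact ContinuousLinearMap.unit_le_opNorm _ _ (by simp [Prod.norm_def])

theorem norm_fderiv_le_norm_fderiv_uncurry (hf : DifferentiableAt ℝ (uncurry f) (x, t)) :
    ‖fderiv ℝ (fun y => f y t) x‖ ≤ ‖fderiv ℝ (uncurry f) (x, t)‖ := by
  rw [(hasFDerivAt_of_differentiableAt_uncurry hf).fderiv]
  exact (ContinuousLinearMap.opNorm_comp_le _ _).trans
    (mul_le_of_le_one_right (norm_nonneg _) (ContinuousLinearMap.norm_inl_le_one ℝ E ℝ))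

theorem contDiff_uncurry_deriv (hf : ContDiff ℝ n (uncurry f)) (hmn : m + 1 ≤ n) :
    ContDiff ℝ m (uncurry fun x t => deriv (f x) t) := by
  have hpath : ContDiff ℝ n (uncurry fun (q : E × ℝ) t => f q.1 t) :=
    hf.comp ((contDiff_fst.comp contDiff_fst).prodMk contDiff_snd)
  exact (hpath.fderiv contDiff_snd hmn).clm_apply contDiff_const

theorem contDiff_uncurry_fderiv (hf : ContDiff ℝ n (uncurry f)) (hmn : m + 1 ≤ n) :
    ContDiff ℝ m (uncurry fun x t => fderiv ℝ (fun y => f y t) x) := by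
  have hslice : ContDiff ℝ n (uncurry fun (q : E × ℝ) y => f y q.2) :=
    hf.comp (contDiff_snd.prodMk (contDiff_snd.comp contDiff_fst))
  exact hslice.fderiv contDiff_fst hmn

theorem hasDerivAt_fderiv_slice (hf : ContDiff ℝ 2 (uncurry f)) (x : E) (t : ℝ) :
    HasDerivAt (fun t => fderiv ℝ (fun y => f y t) x) (fderiv ℝ (fun y => deriv (f y) t) x) t := by
  have hdf : Differentiable ℝ (uncurry f) := hf.differentiable (by simp)
  have hslice : (fun t => fderiv ℝ (fun y => f y t) x) =
      fun t => fderiv ℝ (uncurry f) (x, t) ∘L .inl ℝ E ℝ :=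
    funext fun t => (hasFDerivAt_of_differentiableAt_uncurry (hdf (x, t))).fderiv
  have htime : (fun y => deriv (f y) t) = fun y => fderiv ℝ (uncurry f) (y, t) (0, 1) :=
    funext fun y => (hasDerivAt_of_differentiableAt_uncurry (hdf (y, t))).deriv
  have hdf' : DifferentiableAt ℝ (fderiv ℝ (uncurry f)) (x, t) :=
    (hf.fderiv_right (m := 1) (by norm_num)).differentiable (by simp) (x, t)
  have hx := (hdf'.hasFDerivAt.comp (f := fun y => (y, t)) x
    (hasFDerivAt_prodMk_left x t)).clm_apply (hasFDerivAt_const ((0 : E), (1 : ℝ)) x)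
  have ht := (hdf'.hasFDerivAt.comp_hasDerivAt t
    ((hasDerivAt_const t x).prodMk (hasDerivAt_id t))).clm_comp
    (hasDerivAt_const t (ContinuousLinearMap.inl ℝ E ℝ))
  have hsymm : IsSymmSndFDerivAt ℝ (uncurry f) (x, t) :=
    hf.contDiffAt.isSymmSndFDerivAt (by simp)
  rw [hslice, htime]
  refine ht.congr_deriv (Eq.trans (ContinuousLinearMap.ext fun v => ?_) hx.fderiv.symm)
  simpa using hsymm.eq (0, 1) (v, 0)

end TimeSlices

theorem norm_fderiv_exp_const_mul_le {E : Type*} [NormedAddCommGroup E] [NormedSpace ℝ E]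
    {f : E → ℝ} {x : E} {A c : ℝ} (hc : 0 ≤ c) (hf : DifferentiableAt ℝ f x)
    (hA : ‖fderiv ℝ f x‖ ≤ A) :
    ‖fderiv ℝ (fun y => exp (c * f y)) x‖ ≤ c * A * exp (c * f x) := by
  rw [(hf.hasFDerivAt.const_mul c).exp.fderiv, norm_smul, norm_smul,
    norm_of_nonneg (exp_pos _).le, norm_of_nonneg hc, mul_comm]
  gcongr

section Gradient

variable {E : Type*} [NormedAddCommGroup E] [InnerProductSpace ℝ E] [CompleteSpace E]

theorem norm_gradient (f : E → ℝ) (x : E) : ‖∇ f x‖ = ‖fderiv ℝ f x‖ :=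
  LinearIsometryEquiv.norm_map _ _

theorem gradient_mul {f g : E → ℝ} {x : E} (hf : DifferentiableAt ℝ f x)
    (hg : DifferentiableAt ℝ g x) :
    ∇ (fun y => f y * g y) x = f x • ∇ g x + g x • ∇ f x := by
  simp only [gradient, fderiv_fun_mul hf hg, map_add, map_smul]

theorem gradient_eq_zero_of_notMem {f : E → ℝ} {K : Set E} {x : E} (hK : IsClosed K)
    (hf : ∀ y ∉ K, f y = 0) (hx : x ∉ K) : ∇ f x = 0 := by
  have hzero : f =ᶠ[𝓝 x] fun _ => 0 := Filter.eventually_of_mem (hK.isOpen_compl.mem_nhds hx) hf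
  rw [hzero.gradient_eq, gradient_fun_const]

variable {f : E → ℝ → ℝ} {m n : WithTop ℕ∞}

theorem contDiff_uncurry_gradient (hf : ContDiff ℝ n (uncurry f)) (hmn : m + 1 ≤ n) :
    ContDiff ℝ m (uncurry fun x t => ∇ (fun y => f y t) x) :=
  (InnerProductSpace.toDual ℝ E).symm.contDiff.comp (contDiff_uncurry_fderiv hf hmn)

theorem hasDerivAt_gradient_slice (hf : ContDiff ℝ 2 (uncurry f)) (x : E) (t : ℝ) :
    HasDerivAt (fun t => ∇ (fun y => f y t) x) (∇ (fun y => deriv (f y) t) x) t :=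
  (InnerProductSpace.toDual ℝ E).symm.toContinuousLinearEquiv.hasFDerivAt.comp_hasDerivAt t
    (hasDerivAt_fderiv_slice hf x t)

end Gradient

section Laplacian

variable {E : Type*} [NormedAddCommGroup E] [InnerProductSpace ℝ E] [FiniteDimensional ℝ E]

theorem laplacian_eq_sum_fderiv_fderiv {ι : Type*} [Fintype ι] (b : OrthonormalBasis ι ℝ E)
    {u : E → ℝ} (hu : ContDiff ℝ 2 u) (x : E) :
    Δ u x = ∑ i, fderiv ℝ (fun y => fderiv ℝ u y (b i)) x (b i) := by
  have hdu : DifferentiableAt ℝ (fderiv ℝ u) x :=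
    (hu.fderiv_right (m := 1) (by norm_num)).differentiable (by simp) x
  simp only [InnerProductSpace.laplacian_eq_iteratedFDeriv_orthonormalBasis u b,
    iteratedFDeriv_two_apply, fderiv_clm_apply hdu (differentiableAt_const _)]
  simp

theorem lap_eq_laplacian {n : ℕ} {u : EuclideanSpace ℝ (Fin n) → ℝ} (hu : ContDiff ℝ 2 u)
    (x : EuclideanSpace ℝ (Fin n)) : lap u x = Δ u x := by
  simp only [lap, laplacian_eq_sum_fderiv_fderiv (EuclideanSpace.basisFun (Fin n) ℝ) hu,
    EuclideanSpace.basisFun_apply]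

theorem laplacian_eq_zero_of_notMem {u : E → ℝ} {K : Set E} {x : E} (hK : IsClosed K)
    (hu : ∀ y ∉ K, u y = 0) (hx : x ∉ K) : Δ u x = 0 := by
  have hzero : u =ᶠ[𝓝 x] fun _ => 0 := Filter.eventually_of_mem (hK.isOpen_compl.mem_nhds hx) hu
  rw [(InnerProductSpace.laplacian_congr_nhds hzero).eq_of_nhds]
  exact congrFun InnerProductSpace.laplacian_const x

theorem continuous_uncurry_laplacian {f : E → ℝ → ℝ} (hf : ContDiff ℝ 2 (uncurry f)) :
    Continuous (uncurry fun x t => Δ (fun y => f y t) x) := by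
  have hslice (t : ℝ) : ContDiff ℝ 2 fun y => f y t := hf.comp (contDiff_prodMk_left t)
  have hdf (v : E) : ContDiff ℝ 1 (uncurry fun x t => fderiv ℝ (fun y => f y t) x v) :=
    (contDiff_uncurry_fderiv hf (by norm_num)).clm_apply contDiff_const
  simp only [uncurry_def, laplacian_eq_sum_fderiv_fderiv (stdOrthonormalBasis ℝ E) (hslice _)]
  exact continuous_finsetSum _ fun i _ =>
    ((contDiff_uncurry_fderiv (hdf _) (m := 0) (by norm_num)).clm_apply
      contDiff_const).continuous

theorem integral_mul_laplacian_add_inner_gradient_eq_zero [MeasurableSpace E] [BorelSpace E]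
    (μ : Measure E) [μ.IsAddHaarMeasure] {v u : E → ℝ} (hv : ContDiff ℝ 1 v)
    (hv_supp : HasCompactSupport v) (hu : ContDiff ℝ 2 u) :
    ∫ x, (v x * Δ u x + ⟪∇ v x, ∇ u x⟫) ∂μ = 0 := by
  set b := stdOrthonormalBasis ℝ E
  have hdv : Continuous (fderiv ℝ v) := hv.continuous_fderiv (by simp)
  have hdv_supp (w : E) : HasCompactSupport fun x => fderiv ℝ v x w := hv_supp.fderiv_apply ℝ w
  have hdu (w : E) : ContDiff ℝ 1 fun x => fderiv ℝ u x w :=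
    (hu.fderiv_right (by norm_num)).clm_apply contDiff_const
  have hddu (w : E) : Continuous fun x => fderiv ℝ (fun y => fderiv ℝ u y w) x w :=
    ((hdu w).continuous_fderiv (by simp)).clm_apply continuous_const
  have hleft (w : E) : Integrable (fun x => v x * fderiv ℝ (fun y => fderiv ℝ u y w) x w) μ :=
    (hv.continuous.mul (hddu w)).integrable_of_hasCompactSupport hv_supp.mul_right
  have hright (w : E) : Integrable (fun x => fderiv ℝ v x w * fderiv ℝ u x w) μ :=
    ((hdv.clm_apply continuous_const).mul (hdu w).continuous).integrable_of_hasCompactSupport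
      (hdv_supp w).mul_right
  have hsum (w : E) : Integrable (fun x => v x * fderiv ℝ (fun y => fderiv ℝ u y w) x w +
      fderiv ℝ v x w * fderiv ℝ u x w) μ := (hleft w).add (hright w)
  have hinner (x : E) : ⟪∇ v x, ∇ u x⟫ = ∑ i, fderiv ℝ v x (b i) * fderiv ℝ u x (b i) := by
    rw [← b.sum_inner_mul_inner]
    simp only [inner_gradient_left, inner_gradient_right, conj_trivial]
  simp only [laplacian_eq_sum_fderiv_fderiv b hu, hinner, Finset.mul_sum,
    ← Finset.sum_add_distrib]
  rw [integral_finsetSum _ fun i _ => hsum (b i)]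
  refine Finset.sum_eq_zero fun i _ => ?_
  rw [integral_add (hleft (b i)) (hright (b i)), ← eq_neg_iff_add_eq_zero]
  exact integral_mul_fderiv_eq_neg_fderiv_mul_of_integrable (hright (b i)) (hleft (b i))
    ((hv.continuous.mul (hdu _).continuous).integrable_of_hasCompactSupport hv_supp.mul_right)
    (fun x _ => hv.differentiable (by simp) x) fun x _ => (hdu _).differentiable (by simp) x

end Laplacian

section CompactSupport

variable {X F : Type*} [TopologicalSpace X] [MeasurableSpace X] [BorelSpace X]
  [NormedAddCommGroup F] {μ : Measure X} [IsFiniteMeasureOnCompacts μ] {K : Set X}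
  {f f' : X → ℝ → F}

theorem continuous_integral_of_compact_support [NormedSpace ℝ F] (hK : IsCompact K)
    (hf : Continuous (uncurry f)) (hf_zero : ∀ x ∉ K, ∀ t, f x t = 0) :
    Continuous fun t => ∫ x, f x t ∂μ := by
  rw [← continuousOn_univ]
  exact continuousOn_integral_of_compact_support (f := fun t x => f x t) hK
    (hf.comp continuous_swap).continuousOn fun t x _ hx => hf_zero x hx t

variable [T2Space X]

theorem integrable_slice_of_compact_support (hK : IsCompact K) (hf : Continuous (uncurry f))
    (hf_zero : ∀ x ∉ K, ∀ t, f x t = 0) (t : ℝ) : Integrable (fun x => f x t) μ :=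
  (hf.comp (by fun_prop : Continuous fun x => (x, t))).integrable_of_hasCompactSupport
    (.intro hK fun x hx => hf_zero x hx t)

theorem hasDerivAt_integral_of_compact_support [NormedSpace ℝ F] (hK : IsCompact K)
    (hf : Continuous (uncurry f)) (hf' : Continuous (uncurry f'))
    (hderiv : ∀ x t, HasDerivAt (f x) (f' x t) t) (hf_zero : ∀ x ∉ K, ∀ t, f x t = 0) (t : ℝ) :
    HasDerivAt (fun t => ∫ x, f x t ∂μ) (∫ x, f' x t ∂μ) t := by
  have hf'_zero : ∀ x ∉ K, ∀ t, f' x t = 0 := fun x hx t =>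
    (hderiv x t).unique ((hasDerivAt_const t 0).congr_of_eventuallyEq (.of_forall (hf_zero x hx)))
  obtain ⟨C, hC⟩ := (hK.prod (isCompact_Icc (a := t - 1) (b := t + 1))).exists_bound_of_continuousOn
    hf'.continuousOn
  have hbound (x : X) : ∀ r ∈ Icc (t - 1) (t + 1), ‖f' x r‖ ≤ K.indicator (fun _ => C) x := by
    intro r hr
    by_cases hx : x ∈ K
    · exact (hC (x, r) ⟨hx, hr⟩).trans_eq (indicator_of_mem hx fun _ => C).symm
    · simp only [indicator_of_notMem hx, hf'_zero x hx r, norm_zero, le_refl]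
  exact (hasDerivAt_integral_of_dominated_loc_of_deriv_le (F := fun t x => f x t)
    (F' := fun t x => f' x t) (Icc_mem_nhds (sub_one_lt t) (lt_add_one t))
    (.of_forall fun r => (integrable_slice_of_compact_support hK hf hf_zero r).1)
    (integrable_slice_of_compact_support hK hf hf_zero t)
    (integrable_slice_of_compact_support hK hf' hf'_zero t).1
    (.of_forall hbound)
    ((integrable_indicator_iff hK.measurableSet).2 (integrableOn_const hK.measure_ne_top))
    (.of_forall fun x r _ => hderiv x r)).2

end CompactSupport

theorem le_setAverage_add_setIntegral_of_deriv_le {f f' g : ℝ → ℝ} {a b : ℝ} (hab : a < b)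
    (hf : ContinuousOn f (Icc a b)) (hderiv : ∀ t ∈ Ioo a b, HasDerivAt f (f' t) t)
    (hg : IntegrableOn g (Icc a b)) (hg_nonneg : ∀ t ∈ Icc a b, 0 ≤ g t)
    (hle : ∀ t ∈ Ioo a b, f' t ≤ g t) :
    f b ≤ (⨍ t in Ioo a b, f t) + ∫ t in Ioo a b, g t := by
  obtain ⟨t, ht, hft⟩ : ∃ t ∈ Ioo a b, f t ≤ ⨍ r in Ioo a b, f r :=
    exists_le_setAverage (by simp [hab]) (by simp)
      (hf.integrableOn_Icc.mono_set Ioo_subset_Icc_self)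
  have hincr : f b - f t ≤ ∫ r in t..b, g r :=
    intervalIntegral.sub_le_integral_of_hasDeriv_right_of_le ht.2.le
      (hf.mono (Icc_subset_Icc_left ht.1.le))
      (fun r hr => (hderiv r (Ioo_subset_Ioo_left ht.1.le hr)).hasDerivWithinAt)
      (hg.mono_set (Icc_subset_Icc_left ht.1.le))
      fun r hr => hle r (Ioo_subset_Ioo_left ht.1.le hr)
  have hmono : ∫ r in t..b, g r ≤ ∫ r in Ioo a b, g r := by
    rw [intervalIntegral.integral_of_le ht.2.le, integral_Ioc_eq_integral_Ioo]
    exact setIntegral_mono_set (hg.mono_set Ioo_subset_Icc_self)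
      (ae_restrict_of_forall_mem measurableSet_Ioo fun r hr => hg_nonneg r (Ioo_subset_Icc_self hr))
      (Ioo_subset_Ioo_left ht.1.le).eventuallyLE
  linarith

section WeightedEnergy

variable {E : Type*} [NormedAddCommGroup E] [InnerProductSpace ℝ E] [FiniteDimensional ℝ E]

/-- Twice the energy density `½ (|∂ₜz|² + |∇z|²)` of the wave equation; the factor `½` is part of
`weightedEnergy`. -/
noncomputable def energyDensity (z : E → ℝ → ℝ) (x : E) (t : ℝ) : ℝ :=
  deriv (z x) t ^ 2 + ‖∇ (fun y => z y t) x‖ ^ 2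

/-- The wave operator `∂ₜ²z - Δz`, whose value is the source term of the energy estimate. -/
noncomputable def dAlembertian (z : E → ℝ → ℝ) (x : E) (t : ℝ) : ℝ :=
  deriv (deriv (z x)) t - Δ (fun y => z y t) x

/-- The integrand `½ ∂ₜw (|∂ₜz|² + |∇z|²) + ∂ₜz (w (∂ₜ²z - Δz) - ∇w · ∇z)` of the energy identity
(2.24): its spatial integral is the time derivative of the energy with weight `w`. -/
noncomputable def energyRate (w z : E → ℝ → ℝ) (x : E) (t : ℝ) : ℝ :=
  1 / 2 * deriv (w x) t * energyDensity z x t + deriv (z x) t *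
    (w x t * dAlembertian z x t - ⟪∇ (fun y => w y t) x, ∇ (fun y => z y t) x⟫)

/-- The energy `½ ∫ w (|∂ₜz|² + |∇z|²) dμ` of `z` at time `t` with weight `w`. The domain of
integration is encoded in `μ`: the energy on `Ω` is that of `μ.restrict Ω`. -/
noncomputable def weightedEnergy [MeasurableSpace E] (μ : Measure E) (w z : E → ℝ → ℝ) (t : ℝ) :
    ℝ :=
  1 / 2 * ∫ x, w x t * energyDensity z x t ∂μ

variable {w z : E → ℝ → ℝ} {K : Set E}

theorem energyDensity_nonneg (z : E → ℝ → ℝ) (x : E) (t : ℝ) : 0 ≤ energyDensity z x t := by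
  unfold energyDensity
  positivity

theorem weightedEnergy_nonneg [MeasurableSpace E] {μ : Measure E} {t : ℝ}
    (hw_nonneg : ∀ x, 0 ≤ w x t) : 0 ≤ weightedEnergy μ w z t :=
  mul_nonneg one_half_pos.le
    (integral_nonneg fun x => mul_nonneg (hw_nonneg x) (energyDensity_nonneg z x t))

theorem contDiff_uncurry_energyDensity (hz : ContDiff ℝ 2 (uncurry z)) :
    ContDiff ℝ 1 (uncurry (energyDensity z)) :=
  ((contDiff_uncurry_deriv hz (by norm_num)).pow 2).add
    ((contDiff_uncurry_gradient hz (by norm_num)).norm_sq ℝ)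

theorem hasDerivAt_energyDensity (hz : ContDiff ℝ 2 (uncurry z)) (x : E) (t : ℝ) :
    HasDerivAt (energyDensity z x)
      (2 * (deriv (z x) t * deriv (deriv (z x)) t +
        ⟪∇ (fun y => z y t) x, ∇ (fun y => deriv (z y) t) x⟫)) t := by
  have hzt : HasDerivAt (deriv (z x)) (deriv (deriv (z x)) t) t :=
    (hasDerivAt_of_differentiableAt_uncurry (f := fun x t => deriv (z x) t)
      ((contDiff_uncurry_deriv hz (m := 1) (by norm_num)).differentiable (by simp) _)
      ).differentiableAt.hasDerivAt
  refine ((hzt.pow 2).add (hasDerivAt_gradient_slice hz x t).norm_sq).congr_deriv ?_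
  push_cast
  ring

theorem energyDensity_eq_zero_of_notMem (hK : IsClosed K) (hz_zero : ∀ x ∉ K, ∀ t, z x t = 0)
    {x : E} (hx : x ∉ K) (t : ℝ) : energyDensity z x t = 0 := by
  have hzt : deriv (z x) t = 0 := by rw [funext (hz_zero x hx), deriv_const]
  simp [energyDensity, hzt, gradient_eq_zero_of_notMem hK (fun y hy => hz_zero y hy t) hx]

theorem continuous_uncurry_dAlembertian (hz : ContDiff ℝ 2 (uncurry z)) :
    Continuous (uncurry (dAlembertian z)) :=
  (contDiff_uncurry_deriv (m := 0) (contDiff_uncurry_deriv hz (m := 1) (by norm_num))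
    (by norm_num)).continuous.sub (continuous_uncurry_laplacian hz)

theorem dAlembertian_eq_zero_of_notMem (hK : IsClosed K) (hz_zero : ∀ x ∉ K, ∀ t, z x t = 0)
    {x : E} (hx : x ∉ K) (t : ℝ) : dAlembertian z x t = 0 := by
  have hzt : deriv (z x) = fun _ => 0 := by rw [funext (hz_zero x hx), deriv_const']
  simp [dAlembertian, hzt, laplacian_eq_zero_of_notMem hK (fun y hy => hz_zero y hy t) hx]

theorem continuous_uncurry_mul_dAlembertian_sq (hw : Continuous (uncurry w))
    (hz : ContDiff ℝ 2 (uncurry z)) :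
    Continuous (uncurry fun x t => w x t * dAlembertian z x t ^ 2) :=
  hw.mul ((continuous_uncurry_dAlembertian hz).pow 2)

theorem mul_dAlembertian_sq_eq_zero_of_notMem (hK : IsClosed K)
    (hz_zero : ∀ x ∉ K, ∀ t, z x t = 0) {x : E} (hx : x ∉ K) (t : ℝ) :
    w x t * dAlembertian z x t ^ 2 = 0 := by
  simp [dAlembertian_eq_zero_of_notMem hK hz_zero hx]

theorem continuous_uncurry_energyRate (hw : ContDiff ℝ 1 (uncurry w))
    (hz : ContDiff ℝ 2 (uncurry z)) : Continuous (uncurry (energyRate w z)) := by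
  have hwt := (contDiff_uncurry_deriv hw (m := 0) (by norm_num)).continuous
  have hzt := (contDiff_uncurry_deriv hz (m := 1) (by norm_num)).continuous
  have hgw := (contDiff_uncurry_gradient hw (m := 0) (by norm_num)).continuous
  have hgz := (contDiff_uncurry_gradient hz (m := 1) (by norm_num)).continuous
  exact ((continuous_const.mul hwt).mul (contDiff_uncurry_energyDensity hz).continuous).add
    (hzt.mul ((hw.continuous.mul (continuous_uncurry_dAlembertian hz)).sub (hgw.inner hgz)))

theorem energyRate_eq_zero_of_notMem (hK : IsClosed K) (hz_zero : ∀ x ∉ K, ∀ t, z x t = 0)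
    {x : E} (hx : x ∉ K) (t : ℝ) : energyRate w z x t = 0 := by
  simp [energyRate, energyDensity_eq_zero_of_notMem hK hz_zero hx,
    dAlembertian_eq_zero_of_notMem hK hz_zero hx,
    gradient_eq_zero_of_notMem hK (fun y hy => hz_zero y hy t) hx]

-- The right-hand side is the divergence of `w ∂ₜz ∇z`, so it integrates to zero.
theorem half_deriv_mul_energyDensity_sub_energyRate (hw : ContDiff ℝ 1 (uncurry w))
    (hz : ContDiff ℝ 2 (uncurry z)) (x : E) (t : ℝ) :
    1 / 2 * deriv (fun t => w x t * energyDensity z x t) t - energyRate w z x t =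
      w x t * deriv (z x) t * Δ (fun y => z y t) x +
        ⟪∇ (fun y => w y t * deriv (z y) t) x, ∇ (fun y => z y t) x⟫ := by
  have hdw : DifferentiableAt ℝ (uncurry w) (x, t) := hw.differentiable (by simp) _
  have hdzt : DifferentiableAt ℝ (uncurry fun x t => deriv (z x) t) (x, t) :=
    (contDiff_uncurry_deriv hz (m := 1) (by norm_num)).differentiable (by simp) _
  have hderiv : deriv (fun t => w x t * energyDensity z x t) t = _ :=
    ((hasDerivAt_of_differentiableAt_uncurry hdw).differentiableAt.hasDerivAt.mul
      (hasDerivAt_energyDensity hz x t)).deriv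
  rw [hderiv, gradient_mul (hasFDerivAt_of_differentiableAt_uncurry hdw).differentiableAt
    (hasFDerivAt_of_differentiableAt_uncurry hdzt).differentiableAt, inner_add_left,
    real_inner_smul_left, real_inner_smul_left,
    real_inner_comm (∇ (fun y => deriv (z y) t) x), energyRate, dAlembertian]
  ring

theorem energyRate_le {B s : ℝ} {x : E} {t : ℝ} (hs : 0 < s)
    (hdw : DifferentiableAt ℝ (uncurry w) (x, t)) (hw_nonneg : 0 ≤ w x t)
    (hB : ‖fderiv ℝ (uncurry w) (x, t)‖ ≤ B * w x t) :
    energyRate w z x t ≤ (2 * B + s) * (1 / 2 * (w x t * energyDensity z x t)) +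
      1 / (2 * s) * (w x t * dAlembertian z x t ^ 2) := by
  set p := deriv (z x) t
  set q := ∇ (fun y => z y t) x
  set r := dAlembertian z x t
  have hwt : deriv (w x) t ≤ B * w x t :=
    (le_abs_self _).trans ((norm_deriv_le_norm_fderiv_uncurry hdw).trans hB)
  have hgw : ‖∇ (fun y => w y t) x‖ ≤ B * w x t :=
    (norm_gradient _ _).trans_le ((norm_fderiv_le_norm_fderiv_uncurry hdw).trans hB)
  have htime : deriv (w x) t * (p ^ 2 + ‖q‖ ^ 2) ≤ B * w x t * (p ^ 2 + ‖q‖ ^ 2) :=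
    mul_le_mul_of_nonneg_right hwt (by positivity)
  have hspace : -(p * ⟪∇ (fun y => w y t) x, q⟫) ≤ B * w x t * (1 / 2 * (p ^ 2 + ‖q‖ ^ 2)) :=
    calc -(p * ⟪∇ (fun y => w y t) x, q⟫)
      _ ≤ |p| * |⟪∇ (fun y => w y t) x, q⟫| := (neg_le_abs _).trans_eq (abs_mul _ _)
      _ ≤ |p| * (B * w x t * ‖q‖) := by
        gcongr
        exact (abs_real_inner_le_norm _ _).trans (by gcongr)
      _ = B * w x t * (|p| * ‖q‖) := by ring
      _ ≤ B * w x t * (1 / 2 * (p ^ 2 + ‖q‖ ^ 2)) := by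
        have hyoung : |p| * ‖q‖ ≤ 1 / 2 * (p ^ 2 + ‖q‖ ^ 2) := by
          linarith [two_mul_le_add_sq |p| ‖q‖, sq_abs p]
        exact mul_le_mul_of_nonneg_left hyoung ((norm_nonneg _).trans hgw)
  have hsource : w x t * (p * r) ≤ w x t * (s / 2 * p ^ 2 + 1 / (2 * s) * r ^ 2) := by
    have hsquare : s / 2 * p ^ 2 + 1 / (2 * s) * r ^ 2 - p * r = (s * p - r) ^ 2 / (2 * s) := by
      field_simp
      ring
    gcongr
    rw [← sub_nonneg, hsquare]
    positivity
  have hdrop : 0 ≤ s / 2 * (w x t * ‖q‖ ^ 2) := by positivity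
  simp only [energyRate, energyDensity]
  linarith

variable [MeasurableSpace E] {μ : Measure E} {Ω : Set E}

theorem weightedEnergy_restrict (hK : IsClosed K) (hKΩ : K ⊆ Ω)
    (hz_zero : ∀ x ∉ K, ∀ t, z x t = 0) :
    weightedEnergy (μ.restrict Ω) w z = weightedEnergy μ w z := by
  funext t
  rw [weightedEnergy, weightedEnergy, setIntegral_eq_integral_of_forall_compl_eq_zero]
  intro x hx
  rw [energyDensity_eq_zero_of_notMem hK hz_zero (notMem_subset hKΩ hx), mul_zero]

theorem setIntegral_mul_dAlembertian_sq_eq_integral (hK : IsClosed K) (hKΩ : K ⊆ Ω)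
    (hz_zero : ∀ x ∉ K, ∀ t, z x t = 0) (t : ℝ) :
    ∫ x in Ω, w x t * dAlembertian z x t ^ 2 ∂μ = ∫ x, w x t * dAlembertian z x t ^ 2 ∂μ :=
  setIntegral_eq_integral_of_forall_compl_eq_zero fun _ hx =>
    mul_dAlembertian_sq_eq_zero_of_notMem hK hz_zero (notMem_subset hKΩ hx) t

variable [BorelSpace E]

theorem integrable_mul_energyDensity [IsFiniteMeasureOnCompacts μ]
    (hw : Continuous (uncurry w)) (hz : ContDiff ℝ 2 (uncurry z)) (hK : IsCompact K)
    (hz_zero : ∀ x ∉ K, ∀ t, z x t = 0) (t : ℝ) :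
    Integrable (fun x => w x t * energyDensity z x t) μ :=
  integrable_slice_of_compact_support (f := fun x t => w x t * energyDensity z x t) hK
    (hw.mul (contDiff_uncurry_energyDensity hz).continuous)
    (fun x hx t => by rw [energyDensity_eq_zero_of_notMem hK.isClosed hz_zero hx, mul_zero]) t

theorem continuous_integral_mul_dAlembertian_sq [IsFiniteMeasureOnCompacts μ]
    (hw : Continuous (uncurry w)) (hz : ContDiff ℝ 2 (uncurry z)) (hK : IsCompact K)
    (hz_zero : ∀ x ∉ K, ∀ t, z x t = 0) :
    Continuous fun t => ∫ x, w x t * dAlembertian z x t ^ 2 ∂μ :=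
  continuous_integral_of_compact_support hK (continuous_uncurry_mul_dAlembertian_sq hw hz)
    fun _ hx => mul_dAlembertian_sq_eq_zero_of_notMem hK.isClosed hz_zero hx

theorem hasDerivAt_weightedEnergy [μ.IsAddHaarMeasure] (hw : ContDiff ℝ 1 (uncurry w))
    (hz : ContDiff ℝ 2 (uncurry z)) (hK : IsCompact K) (hz_zero : ∀ x ∉ K, ∀ t, z x t = 0)
    (t : ℝ) : HasDerivAt (weightedEnergy μ w z) (∫ x, energyRate w z x t ∂μ) t := by
  set D : E → ℝ → ℝ := fun x t => w x t * energyDensity z x t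
  have hD : ContDiff ℝ 1 (uncurry D) := hw.mul (contDiff_uncurry_energyDensity hz)
  have hD' : Continuous (uncurry fun x t => deriv (D x) t) :=
    (contDiff_uncurry_deriv (m := 0) hD (by norm_num)).continuous
  have hD_zero : ∀ x ∉ K, ∀ t, D x t = 0 := fun x hx t => by
    simp only [D, energyDensity_eq_zero_of_notMem hK.isClosed hz_zero hx, mul_zero]
  have hD'_zero : ∀ x ∉ K, ∀ t, deriv (D x) t = 0 := fun x hx t => by
    rw [funext (hD_zero x hx), deriv_const]
  have hderiv : HasDerivAt (weightedEnergy μ w z) (1 / 2 * ∫ x, deriv (D x) t ∂μ) t :=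
    (hasDerivAt_integral_of_compact_support hK hD.continuous hD'
      (fun x t => (hasDerivAt_of_differentiableAt_uncurry
        (hD.differentiable (by simp) (x, t))).differentiableAt.hasDerivAt) hD_zero t).const_mul _
  have hflux_supp : HasCompactSupport fun x => w x t * deriv (z x) t := .intro hK fun x hx => by
    rw [funext (hz_zero x hx), deriv_const, mul_zero]
  have hslice : ContDiff ℝ 1 fun x => w x t * deriv (z x) t :=
    (hw.mul (contDiff_uncurry_deriv (m := 1) hz (by norm_num))).comp (contDiff_prodMk_left t)
  refine hderiv.congr_deriv (sub_eq_zero.1 ?_)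
  rw [← integral_const_mul, ← integral_sub
    ((integrable_slice_of_compact_support hK hD' hD'_zero t).const_mul _)
    (integrable_slice_of_compact_support hK (continuous_uncurry_energyRate hw hz)
      (fun x hx => energyRate_eq_zero_of_notMem hK.isClosed hz_zero hx) t)]
  simp only [D, half_deriv_mul_energyDensity_sub_energyRate hw hz]
  exact integral_mul_laplacian_add_inner_gradient_eq_zero μ hslice hflux_supp
    (hz.comp (contDiff_prodMk_left t))

theorem integral_energyRate_le [IsFiniteMeasureOnCompacts μ] {B s t : ℝ} (hs : 0 < s)
    (hw : ContDiff ℝ 1 (uncurry w)) (hz : ContDiff ℝ 2 (uncurry z)) (hK : IsCompact K)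
    (hz_zero : ∀ x ∉ K, ∀ t, z x t = 0) (hw_nonneg : ∀ x ∈ K, 0 ≤ w x t)
    (hB : ∀ x ∈ K, ‖fderiv ℝ (uncurry w) (x, t)‖ ≤ B * w x t) :
    ∫ x, energyRate w z x t ∂μ ≤ (2 * B + s) * weightedEnergy μ w z t +
      1 / (2 * s) * ∫ x, w x t * dAlembertian z x t ^ 2 ∂μ := by
  have hdensity := integrable_mul_energyDensity (μ := μ) hw.continuous hz hK hz_zero t
  have hsource := integrable_slice_of_compact_support (μ := μ) hK
    (continuous_uncurry_mul_dAlembertian_sq hw.continuous hz)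
    (fun _ hx => mul_dAlembertian_sq_eq_zero_of_notMem hK.isClosed hz_zero hx) t
  have hrate := integrable_slice_of_compact_support (μ := μ) hK
    (continuous_uncurry_energyRate hw hz)
    (fun _ hx => energyRate_eq_zero_of_notMem hK.isClosed hz_zero hx) t
  rw [weightedEnergy, ← integral_const_mul, ← integral_const_mul, ← integral_const_mul,
    ← integral_add ((hdensity.const_mul _).const_mul _) (hsource.const_mul _)]
  refine integral_mono hrate (((hdensity.const_mul _).const_mul _).add (hsource.const_mul _))
    fun x => ?_
  by_cases hx : x ∈ K
  · exact energyRate_le hs (hw.differentiable (by simp) _) (hw_nonneg x hx) (hB x hx)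
  · simp [energyRate_eq_zero_of_notMem hK.isClosed hz_zero hx,
      energyDensity_eq_zero_of_notMem hK.isClosed hz_zero hx,
      mul_dAlembertian_sq_eq_zero_of_notMem hK.isClosed hz_zero hx]

theorem weightedEnergy_le_integral_add_integral [μ.IsAddHaarMeasure] {B s a b : ℝ} (hab : a < b)
    (hB_nonneg : 0 ≤ B) (hs : 0 < s) (hw : ContDiff ℝ 1 (uncurry w))
    (hw_nonneg : ∀ x t, 0 ≤ w x t) (hz : ContDiff ℝ 2 (uncurry z)) (hK : IsCompact K)
    (hz_zero : ∀ x ∉ K, ∀ t, z x t = 0)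
    (hB : ∀ x ∈ K, ∀ t ∈ Ioo a b, ‖fderiv ℝ (uncurry w) (x, t)‖ ≤ B * w x t) :
    weightedEnergy μ w z b ≤
      ((b - a)⁻¹ + 2 * B + s) * (∫ t in Ioo a b, weightedEnergy μ w z t) +
        1 / (2 * s) * ∫ t in Ioo a b, ∫ x, w x t * dAlembertian z x t ^ 2 ∂μ := by
  have hderiv := hasDerivAt_weightedEnergy (μ := μ) hw hz hK hz_zero
  have henergy : Continuous (weightedEnergy μ w z) :=
    continuous_iff_continuousAt.2 fun t => (hderiv t).continuousAt
  have hsource : Continuous fun t => ∫ x, w x t * dAlembertian z x t ^ 2 ∂μ :=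
    continuous_integral_mul_dAlembertian_sq hw.continuous hz hK hz_zero
  have hbound := le_setAverage_add_setIntegral_of_deriv_le hab henergy.continuousOn
    (fun t _ => hderiv t)
    ((henergy.const_mul _).add (hsource.const_mul _)).integrableOn_Icc
    (fun t _ => add_nonneg
      (mul_nonneg (by positivity) (weightedEnergy_nonneg fun x => hw_nonneg x t))
      (mul_nonneg (by positivity)
        (integral_nonneg fun x => mul_nonneg (hw_nonneg x t) (sq_nonneg _))))
    fun t ht => integral_energyRate_le hs hw hz hK hz_zero (fun x _ => hw_nonneg x t)
      fun x hx => hB x hx t ht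
  rw [integral_add', integral_const_mul, integral_const_mul, setAverage_eq, smul_eq_mul,
    volume_real_Ioo_of_le hab.le] at hbound
  · exact hbound.trans_eq (by ring)
  · exact (henergy.const_mul _).integrableOn_Icc.mono_set Ioo_subset_Icc_self
  · exact (hsource.const_mul _).integrableOn_Icc.mono_set Ioo_subset_Icc_self

theorem weightedEnergy_exp_le_integral_add_integral [μ.IsAddHaarMeasure] {φ : E → ℝ → ℝ}
    {A s a b : ℝ} (hab : a < b) (hA_nonneg : 0 ≤ A) (hs : 0 < s) (hφ : ContDiff ℝ 1 (uncurry φ))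
    (hz : ContDiff ℝ 2 (uncurry z)) (hK : IsCompact K) (hz_zero : ∀ x ∉ K, ∀ t, z x t = 0)
    (hA : ∀ x ∈ K, ∀ t ∈ Ioo a b, ‖fderiv ℝ (uncurry φ) (x, t)‖ ≤ A) :
    weightedEnergy μ (fun x t => exp (2 * s * φ x t)) z b ≤
      ((b - a)⁻¹ + 2 * (2 * s * A) + s) *
        (∫ t in Ioo a b, weightedEnergy μ (fun x t => exp (2 * s * φ x t)) z t) +
      1 / (2 * s) * ∫ t in Ioo a b, ∫ x, exp (2 * s * φ x t) * dAlembertian z x t ^ 2 ∂μ := by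
  have hw : ContDiff ℝ 1 (uncurry fun x t => exp (2 * s * φ x t)) := (contDiff_const.mul hφ).exp
  have hB : ∀ x ∈ K, ∀ t ∈ Ioo a b, ‖fderiv ℝ (uncurry fun x t => exp (2 * s * φ x t)) (x, t)‖ ≤
      2 * s * A * exp (2 * s * φ x t) := fun x hx t ht =>
    norm_fderiv_exp_const_mul_le (f := uncurry φ) (by positivity) (hφ.differentiable (by simp) _)
      (hA x hx t ht)
  exact weightedEnergy_le_integral_add_integral hab (by positivity) hs hw
    (fun _ _ => (exp_pos _).le) hz hK hz_zero hB

theorem energy_at_interior_time_bound_general [μ.IsAddHaarMeasure] {Ω : Set E}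
    (hΩ : Bornology.IsBounded Ω) {φ : E → ℝ → ℝ} (hφ : ContDiff ℝ 1 (uncurry φ)) {a b c d : ℝ}
    (hca : c ≤ a) (hab : a < b) (hbd : b ≤ d) :
    ∃ M > 0, ∀ s ≥ 1, ∀ z : E → ℝ → ℝ, ContDiff ℝ 2 (uncurry z) →
      (∃ K, IsCompact K ∧ K ⊆ Ω ∧ ∀ x ∉ K, ∀ t, z x t = 0) →
      weightedEnergy (μ.restrict Ω) (fun x t => exp (2 * s * φ x t)) z b ≤
        M * s * (∫ t in Ioo a b,
          weightedEnergy (μ.restrict Ω) (fun x t => exp (2 * s * φ x t)) z t) +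
        M / s * ∫ t in Ioo c d, ∫ x in Ω, exp (2 * s * φ x t) * dAlembertian z x t ^ 2 ∂μ := by
  obtain ⟨A, hA⟩ := (hΩ.isCompact_closure.prod (isCompact_Icc (a := a) (b := b))
    ).exists_bound_of_continuousOn (hφ.continuous_fderiv (by simp)).continuousOn
  have hinv : 0 < (b - a)⁻¹ := inv_pos.2 (sub_pos.2 hab)
  refine ⟨(b - a)⁻¹ + 4 * |A| + 1, by positivity, ?_⟩
  rintro s hs z hz ⟨K, hK, hKΩ, hz_zero⟩
  have hs_pos : 0 < s := one_pos.trans_le hs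
  set w : E → ℝ → ℝ := fun x t => exp (2 * s * φ x t)
  have hw : Continuous (uncurry w) := (continuous_const.mul hφ.continuous).rexp
  have hw_nonneg (x : E) (t : ℝ) : 0 ≤ w x t := (exp_pos _).le
  have hrestrict (t : ℝ) : ∫ x in Ω, exp (2 * s * φ x t) * dAlembertian z x t ^ 2 ∂μ =
      ∫ x, w x t * dAlembertian z x t ^ 2 ∂μ :=
    setIntegral_mul_dAlembertian_sq_eq_integral (w := w) hK.isClosed hKΩ hz_zero t
  simp only [weightedEnergy_restrict hK.isClosed hKΩ hz_zero, hrestrict]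
  have hsource := continuous_integral_mul_dAlembertian_sq (μ := μ) hw hz hK hz_zero
  have hsource_nonneg (t : ℝ) : 0 ≤ ∫ x, w x t * dAlembertian z x t ^ 2 ∂μ :=
    integral_nonneg fun x => mul_nonneg (hw_nonneg x t) (sq_nonneg _)
  refine (weightedEnergy_exp_le_integral_add_integral hab (abs_nonneg A) hs_pos hφ hz hK hz_zero
    fun x hx t ht => (hA (x, t) ⟨subset_closure (hKΩ hx), Ioo_subset_Icc_self ht⟩).trans
      (le_abs_self A)).trans (add_le_add ?_ ?_)
  · refine mul_le_mul_of_nonneg_right ?_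
      (integral_nonneg fun t => weightedEnergy_nonneg fun x => hw_nonneg x t)
    linarith [le_mul_of_one_le_right hinv.le hs]
  · refine mul_le_mul ?_ ?_ (integral_nonneg hsource_nonneg) (by positivity)
    · gcongr
      · linarith [abs_nonneg A]
      · linarith
    · exact setIntegral_mono_set (hsource.integrableOn_Icc.mono_set Ioo_subset_Icc_self)
        (.of_forall hsource_nonneg) (Ioo_subset_Ioo hca hbd).eventuallyLE

end WeightedEnergy

theorem contDiff_uncurry_phi {n : ℕ} {k : WithTop ℕ∞} (x₀ : EuclideanSpace ℝ (Fin n))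
    (β C₀ l : ℝ) : ContDiff ℝ k (uncurry (phi x₀ β C₀ l)) := by
  have hnorm : ContDiff ℝ k fun q : EuclideanSpace ℝ (Fin n) × ℝ => ‖q.1 - x₀‖ ^ 2 :=
    (contDiff_fst.sub contDiff_const).norm_sq ℝ
  unfold phi psi uncurry
  fun_prop

/-- **Estimate (2.28)** (Step 1(b) of the proof of Theorem 2.5): there exist `M > 0` and
`s₀ > 0` such that for every `s ≥ s₀` and every smooth `z` vanishing (in space) outside a
compact subset of `Ω`,
`E_s(T-η) ≤ Ms ∫_{-T+η}^{T-η} E_s(t)dt + (M/s) ∫_{-T}^T ∫_Ω e^{2sφ}|∂ₜ²z - Δz|²`. -/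
theorem energy_at_interior_time_bound
    (n : ℕ) (hn : 1 ≤ n)
    (Ω : Set (EuclideanSpace ℝ (Fin n))) (hΩo : IsOpen Ω) (hΩb : Bornology.IsBounded Ω)
    (T : ℝ) (hT : 0 < T)
    (x₀ : EuclideanSpace ℝ (Fin n)) (hx₀ : x₀ ∉ closure Ω)
    (β : ℝ) (hβ : β ∈ Set.Ioo (0:ℝ) 1) (C₀ : ℝ) (hC₀ : 0 < C₀)
    (hψ : ∀ x ∈ Ω, ∀ t ∈ Set.Ioo (-T) T, 1 ≤ psi x₀ β C₀ x t)
    (l : ℝ) (hl : 1 ≤ l)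
    (η : ℝ) (hη : η ∈ Set.Ioo (0:ℝ) T) :
    ∃ M > (0:ℝ), ∃ s₀ > (0:ℝ), ∀ s ≥ s₀,
      ∀ z : EuclideanSpace ℝ (Fin n) → ℝ → ℝ,
        ContDiff ℝ (⊤ : ℕ∞) (fun q : EuclideanSpace ℝ (Fin n) × ℝ => z q.1 q.2) →
        (∃ K : Set (EuclideanSpace ℝ (Fin n)), IsCompact K ∧ K ⊆ Ω ∧
          ∀ x ∉ K, ∀ t : ℝ, z x t = 0) →
        (1 / 2 : ℝ) * (∫ x in Ω, Real.exp (2 * s * phi x₀ β C₀ l x (T - η)) *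
            ((deriv (z x) (T - η)) ^ 2 + ‖gradient (fun y => z y (T - η)) x‖ ^ 2))
          ≤ M * s * (∫ t in Set.Ioo (-T + η) (T - η),
                (1 / 2 : ℝ) * ∫ x in Ω, Real.exp (2 * s * phi x₀ β C₀ l x t) *
                  ((deriv (z x) t) ^ 2 + ‖gradient (fun y => z y t) x‖ ^ 2))
            + (M / s) * ∫ t in Set.Ioo (-T) T, ∫ x in Ω,
                Real.exp (2 * s * phi x₀ β C₀ l x t) *
                  (deriv (deriv (z x)) t - lap (fun y => z y t) x) ^ 2 := by
  obtain ⟨M, hM, hbound⟩ := energy_at_interior_time_bound_general (μ := volume) hΩb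
    (contDiff_uncurry_phi x₀ β C₀ l) (a := -T + η) (b := T - η) (c := -T) (d := T)
    (by linarith [hη.1]) (by linarith [hη.2]) (by linarith [hη.1])
  refine ⟨M, hM, 1, one_pos, fun s hs z hz hz_supp => ?_⟩
  have hz₂ : ContDiff ℝ 2 (Function.uncurry z) := hz.of_le (by norm_cast)
  have hslice (t : ℝ) : ContDiff ℝ 2 fun y => z y t := hz₂.comp (contDiff_prodMk_left t)
  simpa only [weightedEnergy, energyDensity, dAlembertian, lap_eq_laplacian (hslice _)]
    using hbound s hs z hz₂ hz_supp
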